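/- For all r ∈ [0,1], the second derivative of the function α ↦ t(r,α) at α = 1/2 equals 8·(2r² − 1)/ln 2. In particular this second derivative is negative for r < 1/√2 (so α = 1/2 is a local maximum of t(r,·)) and positive for r > 1/√2 (so α = 1/2 is a local minimum of t(r,·)). -/

import Mathlib

/-! At `α = 1/2` the argument `(1+r)/2 - 2α²r` of the entropy equals `1/2` for every `r`, and
`h'(1/2) = 0`, `h''(1/2) = -4/ln 2`. By the chain rule `∂g/∂α` vanishes there and
`∂²g/∂α² = (2r)²·h''(1/2) = -16r²/ln 2`. Combining the values for `1` and for `r` shows that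
`α = 1/2` is a critical point of `t(r,·)` with second derivative `8(2r² - 1)/ln 2`; the second
derivative test gives the local extremum claims. -/

/-- The base-2 binary entropy function `h(p) = -p·log₂ p - (1-p)·log₂(1-p)`. -/
noncomputable def binEnt (p : ℝ) : ℝ := -(p * Real.logb 2 p) - (1 - p) * Real.logb 2 (1 - p)

/-- `g(r,α) = h((1+r)/2 - 2α²r)`. -/
noncomputable def gFun (r α : ℝ) : ℝ := binEnt ((1 + r) / 2 - 2 * α ^ 2 * r)

/-- `t(r,α) = (1 + g(1,α))/2 + h((1+r)/2) - g(r,α)`. -/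
noncomputable def tFun (r α : ℝ) : ℝ :=
  (1 + gFun 1 α) / 2 + binEnt ((1 + r) / 2) - gFun r α

lemma binEnt_eq_binEntropy_div (p : ℝ) : binEnt p = Real.binEntropy p / Real.log 2 := by
  rw [binEnt, Real.binEntropy_eq_negMulLog_add_negMulLog_one_sub, Real.negMulLog, Real.negMulLog,
    Real.logb, Real.logb]
  ring

/-- The value of `∂g/∂α (r, α)` wherever the entropy is differentiable. -/
noncomputable def gDeriv (r α : ℝ) : ℝ :=
  (Real.log (1 - ((1 + r) / 2 - 2 * α ^ 2 * r)) - Real.log ((1 + r) / 2 - 2 * α ^ 2 * r))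
    * (-(4 * α * r)) / Real.log 2

lemma hasDerivAt_arg (r α : ℝ) :
    HasDerivAt (fun α : ℝ => (1 + r) / 2 - 2 * α ^ 2 * r) (-(4 * α * r)) α := by
  have h := ((((hasDerivAt_id α).pow 2).const_mul 2).mul_const r).const_sub ((1 + r) / 2)
  refine h.congr_deriv ?_
  simp only [id, Nat.cast_ofNat]
  ring

lemma hasDerivAt_gFun (r : ℝ) :
    ∀ᶠ α in nhds (1 / 2 : ℝ), HasDerivAt (gFun r) (gDeriv r α) α := by
  have hc := (hasDerivAt_arg r (1 / 2)).continuousAt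
  filter_upwards [hc.eventually_ne (y := 0) (by ring_nf; norm_num),
    hc.eventually_ne (y := 1) (by ring_nf; norm_num)] with α h0 h1
  have h := ((Real.hasDerivAt_binEntropy h0 h1).comp α (hasDerivAt_arg r α)).div_const (Real.log 2)
  refine h.congr_of_eventuallyEq (Filter.Eventually.of_forall fun x => ?_)
  simp [gFun, binEnt_eq_binEntropy_div]

lemma hasDerivAt_gDeriv (r : ℝ) :
    HasDerivAt (gDeriv r) (-16 * r ^ 2 / Real.log 2) (1 / 2) := by
  have ha := hasDerivAt_arg r (1 / 2)
  have hp : (1 + r) / 2 - 2 * (1 / 2 : ℝ) ^ 2 * r = 1 / 2 := by ring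
  have hq : 1 - ((1 + r) / 2 - 2 * (1 / 2 : ℝ) ^ 2 * r) = 1 / 2 := by ring
  have hl := ((ha.const_sub 1).log (by rw [hq]; norm_num)).sub (ha.log (by rw [hp]; norm_num))
  have hm : HasDerivAt (fun α : ℝ => -(4 * α * r)) (-(4 * 1 * r)) (1 / 2) :=
    (((hasDerivAt_id (1 / 2 : ℝ)).const_mul 4).mul_const r).neg
  refine ((hl.mul hm).div_const (Real.log 2)).congr_deriv ?_
  rw [Pi.sub_apply, hq, hp]
  ring

lemma hasDerivAt_tFun (r : ℝ) :
    ∀ᶠ α in nhds (1 / 2 : ℝ),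
      HasDerivAt (fun α => tFun r α) (gDeriv 1 α / 2 - gDeriv r α) α := by
  filter_upwards [hasDerivAt_gFun 1, hasDerivAt_gFun r] with α h1 hr
  exact (((h1.const_add 1).div_const 2).add_const (binEnt ((1 + r) / 2))).sub hr

lemma gDeriv_half (r : ℝ) : gDeriv r (1 / 2) = 0 := by
  have hp : (1 + r) / 2 - 2 * (1 / 2 : ℝ) ^ 2 * r = 1 / 2 := by ring
  rw [gDeriv, hp]
  norm_num

lemma deriv_deriv_tFun (r : ℝ) :
    deriv (deriv (fun α => tFun r α)) (1 / 2) = 8 * (2 * r ^ 2 - 1) / Real.log 2 := by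
  have he : deriv (fun α => tFun r α) =ᶠ[nhds (1 / 2)] fun α => gDeriv 1 α / 2 - gDeriv r α :=
    (hasDerivAt_tFun r).mono fun α h => h.deriv
  rw [he.deriv_eq]
  refine (((hasDerivAt_gDeriv 1).div_const 2).sub (hasDerivAt_gDeriv r)).deriv.trans ?_
  ring

/-- For all `r ∈ [0,1]`, the second derivative of `α ↦ t(r,α)` at `α = 1/2`
equals `8(2r² - 1)/ln 2`. In particular, it is negative for `r < 1/√2`
(so `α = 1/2` is a local maximum of `t(r,·)`) and positive for `r > 1/√2`
(so `α = 1/2` is a local minimum of `t(r,·)`). -/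
theorem stmt_4 (r : ℝ) (hr : r ∈ Set.Icc (0 : ℝ) 1) :
    deriv (deriv (fun α => tFun r α)) (1 / 2) = 8 * (2 * r ^ 2 - 1) / Real.log 2
    ∧ (r < 1 / Real.sqrt 2 →
        deriv (deriv (fun α => tFun r α)) (1 / 2) < 0 ∧ IsLocalMax (fun α => tFun r α) (1 / 2))
    ∧ (1 / Real.sqrt 2 < r →
        0 < deriv (deriv (fun α => tFun r α)) (1 / 2) ∧ IsLocalMin (fun α => tFun r α) (1 / 2)) := by
  have hd := (hasDerivAt_tFun r).self_of_nhds
  have hd0 : deriv (fun α => tFun r α) (1 / 2) = 0 := by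
    rw [hd.deriv, gDeriv_half, gDeriv_half]
    norm_num
  have hlog : 0 < Real.log 2 := Real.log_pos (by norm_num)
  have hs : (1 / Real.sqrt 2) ^ 2 = 1 / 2 := by
    rw [div_pow, Real.sq_sqrt (by norm_num)]
    norm_num
  have hs0 : 0 < 1 / Real.sqrt 2 := by positivity
  refine ⟨deriv_deriv_tFun r, fun h => ?_, fun h => ?_⟩
  · have hneg : deriv (deriv (fun α => tFun r α)) (1 / 2) < 0 := by
      rw [deriv_deriv_tFun]
      exact div_neg_of_neg_of_pos (by nlinarith [hr.1]) hlog
    exact ⟨hneg, isLocalMax_of_deriv_deriv_neg hneg hd0 hd.continuousAt⟩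
  · have hpos : 0 < deriv (deriv (fun α => tFun r α)) (1 / 2) := by
      rw [deriv_deriv_tFun]
      exact div_pos (by nlinarith [hr.1]) hlog
    exact ⟨hpos, isLocalMin_of_deriv_deriv_pos hpos hd0 hd.continuousAt⟩
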